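/- arXiv:2101.04503 — 5 statements merged into one kernel-verified Lean document; each statement's English description precedes it below -/
import Mathlib

section
/- Let R be a commutative integral domain and m ≥ 0. Let F = (F_0, …, F_m) and G = (G_0, …, G_m) be two vectors in R^{m+1}, each not identically zero, satisfying F_i·G_j = F_j·G_i for all i, j ∈ {0, …, m}. Let α, β : R[y_0, …, y_m] → R[t] be the R-algebra homomorphisms determined by α(y_i) = F_i·t and β(y_i) = G_i·t for all i. Then ker α = ker β. -/
/-!
Pick an index `k` with `F k ≠ 0`. The vanishing of the minors together with `G ≠ 0` forces
`G k ≠ 0`, so `G k • F = F k • G` is a proportionality with nonzero constants. The substitution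
`t ↦ c t` is injective on `R[t]` for `c ≠ 0` over a domain, and composing it (with `c = G k`, resp.
`c = F k`) with the two homomorphisms gives the same homomorphism, so their kernels agree.
-/

/-- Rescaling a vector by a nonzero constant does not change the kernel, since it amounts to
composing with the injective substitution `t ↦ c t`. -/
theorem aeval_smul_eq_zero_iff {R σ : Type*} [CommRing R] [IsDomain R] (F : σ → R) {c : R}
    (hc : c ≠ 0) (p : MvPolynomial σ R) :
    MvPolynomial.aeval (fun i => Polynomial.C (c * F i) * Polynomial.X) p = 0 ↔
      MvPolynomial.aeval (fun i => Polynomial.C (F i) * Polynomial.X) p = 0 := by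
  have key : MvPolynomial.aeval (fun i => Polynomial.C (c * F i) * Polynomial.X) p =
      (MvPolynomial.aeval (fun i => Polynomial.C (F i) * Polynomial.X) p).comp
        (Polynomial.C c * Polynomial.X) := by
    have hom : MvPolynomial.aeval (fun i => Polynomial.C (c * F i) * Polynomial.X) =
        (Polynomial.aeval (Polynomial.C c * Polynomial.X : Polynomial R)).comp
          (MvPolynomial.aeval (fun i => Polynomial.C (F i) * Polynomial.X)) := by
      ext1 i
      simp [← Polynomial.C_eq_algebraMap]
      ring
    exact DFunLike.congr_fun hom p
  rw [key, Polynomial.comp_C_mul_X_eq_zero_iff (mem_nonZeroDivisors_of_ne_zero hc)]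


/-- Over an integral domain `R`, if two nonzero vectors `F` and `G` have vanishing
`2×2` minors with each other, then the `R`-algebra homomorphisms
`R[y₀,…,yₘ] → R[t]`, `yᵢ ↦ Fᵢ·t` and `yᵢ ↦ Gᵢ·t`, have the same kernel. -/
theorem stmt_3 {R : Type*} [CommRing R] [IsDomain R] (m : ℕ)
    (F G : Fin (m + 1) → R) (hF : F ≠ 0) (hG : G ≠ 0)
    (h : ∀ i j, F i * G j = F j * G i) :
    RingHom.ker (MvPolynomial.aeval
        (fun i : Fin (m + 1) => Polynomial.C (F i) * Polynomial.X) :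
        MvPolynomial (Fin (m + 1)) R →ₐ[R] Polynomial R) =
      RingHom.ker (MvPolynomial.aeval
        (fun i : Fin (m + 1) => Polynomial.C (G i) * Polynomial.X) :
        MvPolynomial (Fin (m + 1)) R →ₐ[R] Polynomial R) := by
  obtain ⟨k, hk⟩ := Function.ne_iff.mp hF
  have hk' : F k ≠ 0 := hk
  have hGk : G k ≠ 0 := by
    intro h0
    refine hG (funext fun j => ?_)
    have hj := h k j
    rw [h0, mul_zero] at hj
    exact (mul_eq_zero.mp hj).resolve_left hk'
  have hprop : ∀ i, G k * F i = F k * G i := fun i => by rw [h k i, mul_comm]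
  ext p
  rw [RingHom.mem_ker, RingHom.mem_ker, ← aeval_smul_eq_zero_iff F hGk p,
    ← aeval_smul_eq_zero_iff G hk' p]
  simp only [hprop]
end

section
/- Let R be a commutative integral domain, m ≥ 0, and let F = (F_0, …, F_m) ∈ R^{m+1} with F_{i_0} ≠ 0 for some index i_0. Let α : R[y_0, …, y_m] → R[t] be the R-algebra homomorphism determined by α(y_i) = F_i·t for all i, and let M ⊆ R[y_0, …, y_m] be the ideal generated by the elements F_j·y_i − F_i·y_j for all i, j ∈ {0, …, m}. Then ker α = { P ∈ R[y_0, …, y_m] : ∃ n ≥ 0, F_{i_0}^n · P ∈ M } , i.e. the kernel of α equals the saturation of the ideal of 2×2 minors with respect to the element F_{i_0}. -/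
/-!
Write `f = F i₀` and let `M` be the ideal of minors. Modulo `M` we have `f·yᵢ ≡ Fᵢ·y_{i₀}`, so a
high enough power of `f` turns any polynomial `P` into a one-variable polynomial `Q(y_{i₀})`
(`exists_pow_mul_sub_aeval_mem`). Since `M ⊆ ker α` (`span_minors_le_ker`), applying `α` gives
`f ^ n · α P = Q(f·t)`. If `α P = 0` then `Q(f·t) = 0`, hence `Q = 0` because `f` is a nonzero
element of a domain, and `f ^ n · P ∈ M`. Conversely `f ^ n · P ∈ M` gives `f ^ n · α P = 0`, so
`α P = 0`.
-/

/-- The ideal generated by the minors `Fⱼ·yᵢ − Fᵢ·yⱼ`. -/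
noncomputable abbrev minorIdeal {R σ : Type*} [CommRing R] (F : σ → R) : Ideal (MvPolynomial σ R) :=
  Ideal.span {Q : MvPolynomial σ R | ∃ i j,
    Q = MvPolynomial.C (F j) * MvPolynomial.X i - MvPolynomial.C (F i) * MvPolynomial.X j}

theorem span_minors_le_ker {R σ : Type*} [CommRing R] (F : σ → R) :
    minorIdeal F ≤ RingHom.ker (MvPolynomial.aeval
      (fun i : σ => Polynomial.C (F i) * Polynomial.X) :
        MvPolynomial σ R →ₐ[R] Polynomial R) := by
  rw [Ideal.span_le]
  rintro _ ⟨i, j, rfl⟩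
  simp only [SetLike.mem_coe, RingHom.mem_ker, map_sub, map_mul, MvPolynomial.aeval_X,
    MvPolynomial.aeval_C, Polynomial.algebraMap_eq]
  ring

/-- After multiplication by a power of `F i₀`, every polynomial is congruent, modulo the minors,
to a polynomial in the single variable `y_{i₀}`. -/
theorem exists_pow_mul_sub_aeval_mem {R σ : Type*} [CommRing R] (F : σ → R) (i₀ : σ)
    (P : MvPolynomial σ R) :
    ∃ (n : ℕ) (Q : Polynomial R),
      MvPolynomial.C (F i₀) ^ n * P - Polynomial.aeval (MvPolynomial.X i₀) Q
        ∈ minorIdeal F := by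
  induction P using MvPolynomial.induction_on with
  | C a => exact ⟨0, Polynomial.C a, by simp [MvPolynomial.algebraMap_eq]⟩
  | add p q hp hq =>
    obtain ⟨n, Q, hQ⟩ := hp
    obtain ⟨k, S, hS⟩ := hq
    refine ⟨n + k, Polynomial.C (F i₀) ^ k * Q + Polynomial.C (F i₀) ^ n * S, ?_⟩
    convert add_mem (Ideal.mul_mem_left _ (MvPolynomial.C (F i₀) ^ k) hQ)
      (Ideal.mul_mem_left _ (MvPolynomial.C (F i₀) ^ n) hS) using 1
    simp only [map_add, map_mul, map_pow, Polynomial.aeval_C, MvPolynomial.algebraMap_eq]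
    ring
  | mul_X p i hp =>
    obtain ⟨n, Q, hQ⟩ := hp
    refine ⟨n + 1, Polynomial.C (F i) * Polynomial.X * Q, ?_⟩
    have h : MvPolynomial.C (F i₀) * MvPolynomial.X i - MvPolynomial.C (F i) * MvPolynomial.X i₀
        ∈ minorIdeal F := Ideal.subset_span ⟨i, i₀, rfl⟩
    convert add_mem
      (Ideal.mul_mem_left _ (MvPolynomial.C (F i₀) * MvPolynomial.X i) hQ)
      (Ideal.mul_mem_left _ (Polynomial.aeval (MvPolynomial.X i₀) Q) h) using 1
    simp only [map_mul, Polynomial.aeval_C, Polynomial.aeval_X, MvPolynomial.algebraMap_eq]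
    ring

/-- Over an integral domain `R`, the kernel of the `R`-algebra map
`R[y₀,…,yₘ] → R[t]`, `yᵢ ↦ Fᵢ·t` (the Rees ideal of `(F₀,…,Fₘ)`) equals the saturation,
with respect to any element `F i₀ ≠ 0`, of the ideal generated by the `2×2` minors
`Fⱼ·yᵢ − Fᵢ·yⱼ`. -/
theorem stmt_4 {R : Type*} [CommRing R] [IsDomain R] (m : ℕ)
    (F : Fin (m + 1) → R) (i₀ : Fin (m + 1)) (hF : F i₀ ≠ 0) :
    ∀ P : MvPolynomial (Fin (m + 1)) R,
      P ∈ RingHom.ker (MvPolynomial.aeval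
          (fun i : Fin (m + 1) => Polynomial.C (F i) * Polynomial.X) :
          MvPolynomial (Fin (m + 1)) R →ₐ[R] Polynomial R) ↔
        ∃ n : ℕ, F i₀ ^ n • P ∈ Ideal.span
          {Q : MvPolynomial (Fin (m + 1)) R | ∃ i j,
            Q = MvPolynomial.C (F j) * MvPolynomial.X i
              - MvPolynomial.C (F i) * MvPolynomial.X j} := by
  intro P
  have hle := span_minors_le_ker F
  constructor
  · intro hP
    obtain ⟨n, Q, hQ⟩ := exists_pow_mul_sub_aeval_mem F i₀ P
    have h := hle hQ
    rw [RingHom.mem_ker] at hP h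
    rw [map_sub, map_mul, hP, mul_zero, zero_sub, neg_eq_zero, ← Polynomial.aeval_algHom_apply,
      MvPolynomial.aeval_X] at h
    have hQ0 : Q = 0 := by
      ext k
      -- the coefficient of `t ^ k` in `Q(f·t)` is `Q.coeff k * f ^ k`
      have hk : (Q.comp (Polynomial.C (F i₀) * Polynomial.X)).coeff k = 0 := by
        rw [Polynomial.comp_eq_aeval, h, Polynomial.coeff_zero]
      rw [Polynomial.comp_C_mul_X_coeff] at hk
      simpa [hF] using hk
    refine ⟨n, ?_⟩
    rw [hQ0, map_zero, sub_zero] at hQ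
    rwa [MvPolynomial.smul_eq_C_mul, map_pow]
  · rintro ⟨n, hn⟩
    have h := hle hn
    rw [RingHom.mem_ker, map_smul] at h
    exact (smul_eq_zero.mp h).resolve_left (pow_ne_zero n hF)
end

section
/- Let K be a field, ι a finite nonempty index set, and (V_i)_{i ∈ ι} a family of K-vector spaces. Let v, v' ∈ ∏_{i ∈ ι} V_i be families with v_i ≠ 0 and v'_i ≠ 0 for every i, and suppose there exists a nonzero scalar c ∈ K such that ⨂_{i ∈ ι} v'_i = c • (⨂_{i ∈ ι} v_i) in the tensor product ⨂_{i ∈ ι} V_i. Then for every i ∈ ι there exists a nonzero scalar a_i ∈ K with v'_i = a_i • v_i. -/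
/-! Choose functionals `f j` with `f j (v' j) = 1`. For an index `i` and an arbitrary functional `g`
on `V i`, replace `f i` by `g` and apply the product of the functionals to the hypothesis: this gives
`g (v' i) = (c * ∏_{j ≠ i} f j (v j)) * g (v i)`. The scalar does not depend on `g`, and functionals
separate the points of a vector space, so `v' i` is that scalar times `v i`; the scalar is nonzero
because `v' i` is. -/

/-- If two families of nonzero vectors have proportional pure tensors
`⨂ᵢ v'ᵢ = c • ⨂ᵢ vᵢ` (with `c ≠ 0`), then each `v'ᵢ` is a nonzero scalar multiple
of `vᵢ` (injectivity of the Segre embedding). -/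
theorem stmt_6 {K ι : Type*} [Field K] [Fintype ι] [Nonempty ι]
    {V : ι → Type*} [∀ i, AddCommGroup (V i)] [∀ i, Module K (V i)]
    (v v' : Π i, V i) (hv : ∀ i, v i ≠ 0) (hv' : ∀ i, v' i ≠ 0)
    (c : K) (hc : c ≠ 0)
    (h : PiTensorProduct.tprod K v' = c • PiTensorProduct.tprod K v) :
    ∀ i, ∃ a : K, a ≠ 0 ∧ v' i = a • v i := by
  classical
  intro i
  choose f hf using fun j ↦ Module.Projective.exists_dual_eq_one K (hv' j)
  have key (g : Module.Dual K (V i)) :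
      g (v' i) = (c * ∏ j ∈ Finset.univ.erase i, f j (v j)) * g (v i) := by
    let F : Π j, Module.Dual K (V j) := Function.update f i g
    have hF : ∀ w : Π j, V j, ∏ j, F j (w j) =
        g (w i) * ∏ j ∈ Finset.univ.erase i, f j (w j) := by
      intro w
      rw [← Finset.mul_prod_erase _ _ (Finset.mem_univ i)]
      congr 1
      · simp [F]
      · refine Finset.prod_congr rfl fun j hj ↦ ?_
        simp [F, Function.update_of_ne (Finset.ne_of_mem_erase hj)]
    have h' := congrArg
      (PiTensorProduct.lift ((MultilinearMap.mkPiAlgebra K ι K).compLinearMap F)) h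
    simp only [map_smul, PiTensorProduct.lift.tprod, MultilinearMap.compLinearMap_apply,
      MultilinearMap.mkPiAlgebra_apply, hF, hf, Finset.prod_const_one, mul_one, smul_eq_mul] at h'
    rw [h']
    ring
  have hi : v' i = (c * ∏ j ∈ Finset.univ.erase i, f j (v j)) • v i := by
    rw [← sub_eq_zero, ← Module.forall_dual_apply_eq_zero_iff K]
    intro g
    simp [key g]
  refine ⟨_, fun h0 ↦ hv' i ?_, hi⟩
  rw [hi, h0, zero_smul]
end

section
/- Let K be an algebraically closed field, n, m ≥ 0, and let I ⊂ K[x_0, …, x_n] be a prime ideal. Let F = (F_0, …, F_m) and G = (G_0, …, G_m) be vectors of homogeneous polynomials in K[x_0, …, x_n], all F_i of the same degree d and all G_i of the same degree e, and assume that F_i ∉ I for some i and G_j ∉ I for some j. Then the following are equivalent: (i) for every point x ∈ K^{n+1} lying in the zero locus of I at which the vectors F(x) = (F_0(x), …, F_m(x)) and G(x) = (G_0(x), …, G_m(x)) are both nonzero, the vectors F(x) and G(x) are linearly dependent over K; (ii) F_i·G_j − F_j·G_i ∈ I for all i, j ∈ {0, …, m}. -/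
/-!
A `2 × 2` minor of the matrix with rows `F(x)`, `G(x)` vanishes when either row is zero, and
also when the rows are linearly dependent. So condition (i) says that the minors vanish on the
whole zero locus of `I`; since `I` is prime, the Nullstellensatz
(`MvPolynomial.IsPrime.vanishingIdeal_zeroLocus`) puts them in `I`. Conversely, if the minors
vanish at `x` and `Fᵢ(x) ≠ 0`, then `Gᵢ(x) F(x) = Fᵢ(x) G(x)` is a nontrivial linear relation.
-/


/-- Over an algebraically closed field, two vectors `F`, `G` of homogeneous polynomials
(of degrees `d` and `e`), not all entries in a prime ideal `I`, define the same rational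
map on `V(I)` — i.e. `F(x)` and `G(x)` are linearly dependent at each point `x` of the
zero locus of `I` where both are nonzero — if and only if all the `2×2` minors
`Fᵢ·Gⱼ − Fⱼ·Gᵢ` belong to `I`. -/
theorem stmt_9 {K : Type*} [Field K] [IsAlgClosed K] (n m : ℕ)
    (I : Ideal (MvPolynomial (Fin (n + 1)) K)) (hI : I.IsPrime)
    (d e : ℕ) (F G : Fin (m + 1) → MvPolynomial (Fin (n + 1)) K)
    (hFd : ∀ i, (F i).IsHomogeneous d) (hGe : ∀ i, (G i).IsHomogeneous e)
    (hF : ∃ i, F i ∉ I) (hG : ∃ j, G j ∉ I) :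
    (∀ x : Fin (n + 1) → K, (∀ f ∈ I, MvPolynomial.eval x f = 0) →
        (fun i => MvPolynomial.eval x (F i)) ≠ 0 →
        (fun i => MvPolynomial.eval x (G i)) ≠ 0 →
        ¬ LinearIndependent K ![fun i => MvPolynomial.eval x (F i),
            fun i => MvPolynomial.eval x (G i)]) ↔
      ∀ i j, F i * G j - F j * G i ∈ I := by
  constructor
  · intro h i j
    -- By the Nullstellensatz, it suffices that the minor vanishes on the zero locus of `I`.
    rw [← MvPolynomial.IsPrime.vanishingIdeal_zeroLocus (K := K) I, MvPolynomial.mem_vanishingIdeal_iff]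
    intro x hx
    have hx' : ∀ f ∈ I, MvPolynomial.eval x f = 0 := fun f hf => by
      simpa [MvPolynomial.aeval_eq_eval] using hx f hf
    have key : MvPolynomial.eval x (F i) * MvPolynomial.eval x (G j)
        - MvPolynomial.eval x (F j) * MvPolynomial.eval x (G i) = 0 := by
      by_cases hF0 : (fun i => MvPolynomial.eval x (F i)) = 0
      · have h1 := congrFun hF0 i
        have h2 := congrFun hF0 j
        simp only [Pi.zero_apply] at h1 h2
        simp [h1, h2]
      by_cases hG0 : (fun i => MvPolynomial.eval x (G i)) = 0
      · have h1 := congrFun hG0 i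
        have h2 := congrFun hG0 j
        simp only [Pi.zero_apply] at h1 h2
        simp [h1, h2]
      have hdep := h x hx' hF0 hG0
      rw [LinearIndependent.pair_iff] at hdep
      push Not at hdep
      obtain ⟨s, t, hst, hne⟩ := hdep
      have h1 := congrFun hst i
      have h2 := congrFun hst j
      simp only [Pi.add_apply, Pi.smul_apply, smul_eq_mul, Pi.zero_apply] at h1 h2
      by_cases hs : s = 0
      · apply mul_left_cancel₀ (hne hs)
        linear_combination MvPolynomial.eval x (F i) * h2 - MvPolynomial.eval x (F j) * h1
      · apply mul_left_cancel₀ hs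
        linear_combination MvPolynomial.eval x (G j) * h1 - MvPolynomial.eval x (G i) * h2
    simpa [MvPolynomial.aeval_eq_eval] using key
  · intro h x hx hF0 _ hli
    rw [LinearIndependent.pair_iff] at hli
    obtain ⟨i, hi⟩ := Function.ne_iff.mp hF0
    -- The `i`-th minors give the nontrivial relation `Gᵢ(x) F(x) - Fᵢ(x) G(x) = 0`.
    have hrel := hli (MvPolynomial.eval x (G i)) (-MvPolynomial.eval x (F i)) (by
      funext j
      have hm := hx _ (h i j)
      simp only [map_sub, map_mul] at hm
      simp only [Pi.add_apply, Pi.smul_apply, smul_eq_mul, Pi.zero_apply]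
      linear_combination -hm)
    exact hi (neg_eq_zero.mp hrel.2)
end

section
/- Let K be an algebraically closed field, n, m ≥ 0, and let R = K[x_0, …, x_n, y_0, …, y_m] with irrelevant ideals 𝔪_x = (x_0, …, x_n) and 𝔪_y = (y_0, …, y_m). For an ideal 𝔟 ⊆ R generated by bihomogeneous polynomials, let V°(𝔟) = { (x, y) ∈ K^{n+1} × K^{m+1} : x ≠ 0, y ≠ 0, and f(x, y) = 0 for all f ∈ 𝔟 }, and let sat(𝔟) = ((𝔟 : 𝔪_x^∞) : 𝔪_y^∞) be its multi-saturation, where (𝔠 : J^∞) = { f ∈ R : ∃ N ≥ 0, J^N·f ⊆ 𝔠 }. Then two ideals 𝔞, 𝔞' ⊆ R generated by bihomogeneous polynomials satisfy V°(𝔞) = V°(𝔞') if and only if √(sat(𝔞)) = √(sat(𝔞')). -/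
/-!
The point is that `√(sat(𝔟))` is exactly the ideal of polynomials vanishing on the punctured
bicone `V°(𝔟)` (`mem_radical_sat_iff`), so it is determined by `V°(𝔟)`; conversely `V°(𝔟)` is the
set of points of `V°(0)` at which `√(sat(𝔟))` vanishes (`mem_biCone_iff`).

If `f` vanishes on `V°(𝔟)`, then `𝔪ₓ 𝔪_y f` vanishes on the whole affine zero locus of `𝔟`, because
`𝔪ₓ` vanishes where `x = 0` and `𝔪_y` where `y = 0`. By the Nullstellensatz `𝔪ₓ 𝔪_y (f) ⊆ √𝔟`, and
since the left side is finitely generated, a power of it lies in `𝔟`; this says that a power of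
`f` lies in `sat(𝔟)`. Conversely, at a point of `V°(𝔟)` some `xᵢ` and some `yⱼ` are nonzero, and
`xᵢ ^ N * yⱼ ^ M * f ^ k ∈ 𝔟` forces `f` to vanish there.
-/


/-- The saturation `(b : J^∞) = {f | ∃ N, J^N · f ⊆ b}` of an ideal `b` with respect to
an ideal `J`. -/
def satIdeal {A : Type*} [CommRing A] (b J : Ideal A) : Ideal A where
  carrier := {f | ∃ N : ℕ, ∀ g ∈ J ^ N, g * f ∈ b}
  zero_mem' := ⟨0, fun g _ => by simp⟩
  add_mem' := by
    rintro a a' ⟨N, hN⟩ ⟨M, hM⟩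
    refine ⟨max N M, fun g hg => ?_⟩
    rw [mul_add]
    exact b.add_mem (hN g (Ideal.pow_le_pow_right (le_max_left N M) hg))
      (hM g (Ideal.pow_le_pow_right (le_max_right N M) hg))
  smul_mem' := by
    rintro c a ⟨N, hN⟩
    refine ⟨N, fun g hg => ?_⟩
    rw [smul_eq_mul, ← mul_assoc, mul_comm g c, mul_assoc]
    exact b.mul_mem_left c (hN g hg)

/-- The weight function on `K[x₀,…,xₙ,y₀,…,yₘ]` giving the standard `ℤ²`-grading:
`deg xᵢ = (1,0)` and `deg yⱼ = (0,1)`. -/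
def biWeight (n m : ℕ) : Fin (n + 1) ⊕ Fin (m + 1) → ℕ × ℕ :=
  Sum.elim (fun _ => (1, 0)) (fun _ => (0, 1))

/-- The irrelevant ideal `𝔪ₓ = (x₀,…,xₙ)`. -/
noncomputable def mIdealX (K : Type*) [Field K] (n m : ℕ) :
    Ideal (MvPolynomial (Fin (n + 1) ⊕ Fin (m + 1)) K) :=
  Ideal.span (Set.range fun i : Fin (n + 1) => MvPolynomial.X (Sum.inl i))

/-- The irrelevant ideal `𝔪_y = (y₀,…,yₘ)`. -/
noncomputable def mIdealY (K : Type*) [Field K] (n m : ℕ) :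
    Ideal (MvPolynomial (Fin (n + 1) ⊕ Fin (m + 1)) K) :=
  Ideal.span (Set.range fun j : Fin (m + 1) => MvPolynomial.X (Sum.inr j))

/-- The punctured affine bicone `V°(𝔟)` of an ideal `𝔟` of `K[x₀,…,xₙ,y₀,…,yₘ]`:
the pairs `(x, y)` with `x ≠ 0`, `y ≠ 0` at which every element of `𝔟` vanishes. -/
def biCone {K : Type*} [Field K] {n m : ℕ}
    (𝔟 : Ideal (MvPolynomial (Fin (n + 1) ⊕ Fin (m + 1)) K)) :
    Set ((Fin (n + 1) → K) × (Fin (m + 1) → K)) :=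
  {p | p.1 ≠ 0 ∧ p.2 ≠ 0 ∧ ∀ f ∈ 𝔟, MvPolynomial.eval (Sum.elim p.1 p.2) f = 0}

theorem le_satIdeal {A : Type*} [CommRing A] (b J : Ideal A) : b ≤ satIdeal b J :=
  fun _ hf => ⟨0, fun g _ => b.mul_mem_left g hf⟩

theorem eval_eq_zero_of_mem_mIdealX {K : Type*} [Field K] {n m : ℕ}
    {g : MvPolynomial (Fin (n + 1) ⊕ Fin (m + 1)) K} (hg : g ∈ mIdealX K n m)
    (y : Fin (m + 1) → K) : MvPolynomial.eval (Sum.elim (0 : Fin (n + 1) → K) y) g = 0 := by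
  have h : mIdealX K n m ≤ RingHom.ker (MvPolynomial.eval (Sum.elim (0 : Fin (n + 1) → K) y)) := by
    rw [mIdealX, Ideal.span_le]
    rintro _ ⟨i, rfl⟩
    simp [RingHom.mem_ker]
  exact h hg

theorem eval_eq_zero_of_mem_mIdealY {K : Type*} [Field K] {n m : ℕ}
    {g : MvPolynomial (Fin (n + 1) ⊕ Fin (m + 1)) K} (hg : g ∈ mIdealY K n m)
    (x : Fin (n + 1) → K) : MvPolynomial.eval (Sum.elim x (0 : Fin (m + 1) → K)) g = 0 := by
  have h : mIdealY K n m ≤ RingHom.ker (MvPolynomial.eval (Sum.elim x (0 : Fin (m + 1) → K))) := by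
    rw [mIdealY, Ideal.span_le]
    rintro _ ⟨i, rfl⟩
    simp [RingHom.mem_ker]
  exact h hg

theorem eval_eq_zero_of_mem_radical_sat {K : Type*} [Field K] {n m : ℕ}
    {𝔟 : Ideal (MvPolynomial (Fin (n + 1) ⊕ Fin (m + 1)) K)}
    {f : MvPolynomial (Fin (n + 1) ⊕ Fin (m + 1)) K}
    (hf : f ∈ (satIdeal (satIdeal 𝔟 (mIdealX K n m)) (mIdealY K n m)).radical)
    {p : (Fin (n + 1) → K) × (Fin (m + 1) → K)} (hp : p ∈ biCone 𝔟) :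
    MvPolynomial.eval (Sum.elim p.1 p.2) f = 0 := by
  obtain ⟨hx, hy, hv⟩ := hp
  obtain ⟨i, hi⟩ := Function.ne_iff.mp hx
  obtain ⟨j, hj⟩ := Function.ne_iff.mp hy
  obtain ⟨k, M, hM⟩ := hf
  obtain ⟨N, hN⟩ := hM _ (Ideal.pow_mem_pow (I := mIdealY K n m) (Ideal.subset_span (Set.mem_range_self j)) M)
  have h := hv _ (hN _ (Ideal.pow_mem_pow (I := mIdealX K n m) (Ideal.subset_span (Set.mem_range_self i)) N))
  simp only [map_mul, map_pow, MvPolynomial.eval_X, Sum.elim_inl, Sum.elim_inr] at h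
  rcases mul_eq_zero.mp h with h | h
  · exact absurd (eq_zero_of_pow_eq_zero h) hi
  rcases mul_eq_zero.mp h with h | h
  · exact absurd (eq_zero_of_pow_eq_zero h) hj
  · exact eq_zero_of_pow_eq_zero h

theorem mem_radical_sat_of_eval_eq_zero {K : Type*} [Field K] [IsAlgClosed K] {n m : ℕ}
    {𝔟 : Ideal (MvPolynomial (Fin (n + 1) ⊕ Fin (m + 1)) K)}
    {f : MvPolynomial (Fin (n + 1) ⊕ Fin (m + 1)) K}
    (hf : ∀ p ∈ biCone 𝔟, MvPolynomial.eval (Sum.elim p.1 p.2) f = 0) :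
    f ∈ (satIdeal (satIdeal 𝔟 (mIdealX K n m)) (mIdealY K n m)).radical := by
  have hle : mIdealX K n m * mIdealY K n m * Ideal.span {f} ≤ 𝔟.radical := by
    have hmem : ∀ g ∈ mIdealX K n m, ∀ h ∈ mIdealY K n m, g * h * f ∈ 𝔟.radical := by
      intro g hg h hh
      rw [← MvPolynomial.vanishingIdeal_zeroLocus_eq_radical (K := K),
        MvPolynomial.mem_vanishingIdeal_iff]
      intro z hz
      rw [MvPolynomial.mem_zeroLocus_iff] at hz
      simp only [MvPolynomial.aeval_eq_eval] at hz ⊢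
      obtain ⟨x, y, rfl⟩ : ∃ (x : Fin (n + 1) → K) (y : Fin (m + 1) → K), z = Sum.elim x y :=
        ⟨z ∘ Sum.inl, z ∘ Sum.inr, (Sum.elim_comp_inl_inr z).symm⟩
      rw [map_mul, map_mul]
      by_cases hx : x = 0
      · rw [hx, eval_eq_zero_of_mem_mIdealX hg, zero_mul, zero_mul]
      by_cases hy : y = 0
      · rw [hy, eval_eq_zero_of_mem_mIdealY hh, mul_zero, zero_mul]
      rw [hf (x, y) ⟨hx, hy, hz⟩, mul_zero]
    rw [Ideal.mul_le]
    intro r hr s hs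
    obtain ⟨c, rfl⟩ := Ideal.mem_span_singleton'.mp hs
    have hr' : r ∈ 𝔟.radical.colon {f} := by
      have hcolon : mIdealX K n m * mIdealY K n m ≤ 𝔟.radical.colon {f} := by
        rw [Ideal.mul_le]
        intro g hg h hh
        rw [Submodule.mem_colon_singleton]
        exact hmem g hg h hh
      exact hcolon hr
    rw [Submodule.mem_colon_singleton] at hr'
    rw [mul_left_comm]
    exact Ideal.mul_mem_left _ c hr'
  obtain ⟨N, hN⟩ := Ideal.exists_pow_le_of_le_radical_of_fg hle (IsNoetherian.noetherian _)
  rw [mul_pow, mul_pow] at hN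
  refine ⟨N, N, fun h hh => ⟨N, fun g hg => ?_⟩⟩
  rw [← mul_assoc]
  exact hN (Ideal.mul_mem_mul (Ideal.mul_mem_mul hg hh)
    (Ideal.pow_mem_pow (Ideal.mem_span_singleton_self f) N))

/-- The Nullstellensatz for the punctured bicone. -/
theorem mem_radical_sat_iff {K : Type*} [Field K] [IsAlgClosed K] {n m : ℕ}
    {𝔟 : Ideal (MvPolynomial (Fin (n + 1) ⊕ Fin (m + 1)) K)}
    {f : MvPolynomial (Fin (n + 1) ⊕ Fin (m + 1)) K} :
    f ∈ (satIdeal (satIdeal 𝔟 (mIdealX K n m)) (mIdealY K n m)).radical ↔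
      ∀ p ∈ biCone 𝔟, MvPolynomial.eval (Sum.elim p.1 p.2) f = 0 :=
  ⟨fun hf _ hp => eval_eq_zero_of_mem_radical_sat hf hp, mem_radical_sat_of_eval_eq_zero⟩

/-- Passing from `𝔟` to `√(sat(𝔟))` does not change the punctured bicone. -/
theorem mem_biCone_iff {K : Type*} [Field K] {n m : ℕ}
    {𝔟 : Ideal (MvPolynomial (Fin (n + 1) ⊕ Fin (m + 1)) K)}
    {p : (Fin (n + 1) → K) × (Fin (m + 1) → K)} :
    p ∈ biCone 𝔟 ↔
      p ∈ biCone (satIdeal (satIdeal 𝔟 (mIdealX K n m)) (mIdealY K n m)).radical :=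
  ⟨fun hp => ⟨hp.1, hp.2.1, fun _ hf => eval_eq_zero_of_mem_radical_sat hf hp⟩,
    fun hp => ⟨hp.1, hp.2.1, fun f hf =>
      hp.2.2 f (Ideal.le_radical (le_satIdeal _ _ (le_satIdeal _ _ hf)))⟩⟩

/-- Over an algebraically closed field, two ideals of `K[x₀,…,xₙ,y₀,…,yₘ]` generated by
bihomogeneous polynomials have the same punctured affine bicone `V°` if and only if the
radicals of their multi-saturations `sat(𝔞) = ((𝔞 : 𝔪ₓ^∞) : 𝔪_y^∞)` coincide. -/
theorem stmt_12 {K : Type*} [Field K] [IsAlgClosed K] (n m : ℕ)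
    (𝔞 𝔞' : Ideal (MvPolynomial (Fin (n + 1) ⊕ Fin (m + 1)) K))
    (h𝔞 : ∃ S : Set (MvPolynomial (Fin (n + 1) ⊕ Fin (m + 1)) K),
      (∀ p ∈ S, ∃ d : ℕ × ℕ, MvPolynomial.IsWeightedHomogeneous (biWeight n m) p d) ∧
        𝔞 = Ideal.span S)
    (h𝔞' : ∃ S : Set (MvPolynomial (Fin (n + 1) ⊕ Fin (m + 1)) K),
      (∀ p ∈ S, ∃ d : ℕ × ℕ, MvPolynomial.IsWeightedHomogeneous (biWeight n m) p d) ∧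
        𝔞' = Ideal.span S) :
    biCone 𝔞 = biCone 𝔞' ↔
      (satIdeal (satIdeal 𝔞 (mIdealX K n m)) (mIdealY K n m)).radical =
        (satIdeal (satIdeal 𝔞' (mIdealX K n m)) (mIdealY K n m)).radical := by
  constructor
  · intro h
    ext f
    rw [mem_radical_sat_iff, mem_radical_sat_iff, h]
  · intro h
    ext p
    rw [mem_biCone_iff, h, ← mem_biCone_iff]
end
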